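/- Let k be a field and let φ : k[y₁, y₂, y₃] → k[x₁, x₂] be the k-algebra homomorphism determined by φ(y₁) = x₁x₂, φ(y₂) = x₁x₂², φ(y₃) = x₁². Then the kernel of φ is the principal ideal generated by y₂²y₃ − y₁⁴. -/

import Mathlib

open MvPolynomial

lemma aux_mono (k : Type*) [Field k] (a b c a' b' c' : ℕ) (h1 : a + b + 2 * c = a' + b' + 2 * c')
    (h2 : a + 2 * b = a' + 2 * b') (hc : c ≤ c') :
    Ideal.Quotient.mk (Ideal.span {(X 1 : MvPolynomial (Fin 3) k) ^ 2 * X 2 - X 0 ^ 4})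
      (X 0 ^ a * X 1 ^ b * X 2 ^ c) =
    Ideal.Quotient.mk (Ideal.span {(X 1 : MvPolynomial (Fin 3) k) ^ 2 * X 2 - X 0 ^ 4})
      (X 0 ^ a' * X 1 ^ b' * X 2 ^ c') := by
  obtain ⟨t, rfl⟩ := Nat.exists_eq_add_of_le hc
  obtain rfl : b' = b + 2 * t := by omega
  obtain rfl : a = a' + 4 * t := by omega
  have h : Ideal.Quotient.mk (Ideal.span {(X 1 : MvPolynomial (Fin 3) k) ^ 2 * X 2 - X 0 ^ 4})
      (X 1 ^ 2 * X 2) = Ideal.Quotient.mk _ (X 0 ^ 4) :=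
    Ideal.Quotient.eq.mpr (Ideal.subset_span rfl)
  have e1 : (X 0 ^ (a' + 4 * t) * X 1 ^ b * X 2 ^ c : MvPolynomial (Fin 3) k) =
      X 0 ^ a' * X 1 ^ b * X 2 ^ c * (X 0 ^ 4) ^ t := by ring
  have e2 : (X 0 ^ a' * X 1 ^ (b + 2 * t) * X 2 ^ (c + t) : MvPolynomial (Fin 3) k) =
      X 0 ^ a' * X 1 ^ b * X 2 ^ c * (X 1 ^ 2 * X 2) ^ t := by ring
  rw [e1, e2, map_mul, map_mul _ _ ((X 1 ^ 2 * X 2) ^ t), map_pow _ (X 0 ^ 4) t,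
    map_pow _ (X 1 ^ 2 * X 2) t, h]

lemma aux_monomial (k : Type*) [Field k] (d : Fin 3 →₀ ℕ) :
    (monomial d 1 : MvPolynomial (Fin 3) k) = X 0 ^ d 0 * X 1 ^ d 1 * X 2 ^ d 2 := by
  rw [monomial_eq, Finsupp.prod_fintype _ _ (by simp)]
  simp [Fin.prod_univ_three]

lemma aux_image (k : Type*) [Field k] (d : Fin 3 →₀ ℕ) :
    (MvPolynomial.aeval
        (![X 0 * X 1, X 0 * X 1 ^ 2, X 0 ^ 2] : Fin 3 → MvPolynomial (Fin 2) k))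
      (monomial d 1 : MvPolynomial (Fin 3) k) =
    monomial (Finsupp.equivFunOnFinite.symm ![d 0 + d 1 + 2 * d 2, d 0 + 2 * d 1]) 1 := by
  rw [aux_monomial, monomial_eq, Finsupp.prod_fintype _ _ (by simp)]
  simp [Fin.prod_univ_two]
  ring

/-- Example 2.4 (implicitization): the kernel of the `k`-algebra homomorphism
`k[y₁,y₂,y₃] → k[x₁,x₂]` sending `y₁ ↦ x₁x₂`, `y₂ ↦ x₁x₂²`, `y₃ ↦ x₁²` is the
principal ideal generated by `y₂²y₃ − y₁⁴`. -/
theorem stmt_12 (k : Type*) [Field k] :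
    RingHom.ker (MvPolynomial.aeval
        (![X 0 * X 1, X 0 * X 1 ^ 2, X 0 ^ 2] : Fin 3 → MvPolynomial (Fin 2) k) :
      MvPolynomial (Fin 3) k →ₐ[k] MvPolynomial (Fin 2) k) =
    Ideal.span {(X 1 : MvPolynomial (Fin 3) k) ^ 2 * X 2 - X 0 ^ 4} := by
  classical
  apply le_antisymm
  · intro f hf
    rw [RingHom.mem_ker] at hf
    set I := Ideal.span {(X 1 : MvPolynomial (Fin 3) k) ^ 2 * X 2 - X 0 ^ 4} with hI
    let m : (Fin 3 →₀ ℕ) → (Fin 2 →₀ ℕ) := fun d =>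
      Finsupp.equivFunOnFinite.symm ![d 0 + d 1 + 2 * d 2, d 0 + 2 * d 1]
    let ψ : MvPolynomial (Fin 2) k →ₗ[k] (MvPolynomial (Fin 3) k ⧸ I) :=
      (basisMonomials (Fin 2) k).constr k
        (fun e => Ideal.Quotient.mk I (monomial (Function.invFun m e) 1))
    have key : ψ ∘ₗ (MvPolynomial.aeval
        (![X 0 * X 1, X 0 * X 1 ^ 2, X 0 ^ 2] : Fin 3 → MvPolynomial (Fin 2) k)).toLinearMap
        = (Ideal.Quotient.mkₐ k I).toLinearMap := by
      refine (basisMonomials (Fin 3) k).ext fun d => ?_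
      have h0 : m (Function.invFun m (m d)) = m d := Function.invFun_eq ⟨d, rfl⟩
      have hψ : ψ (monomial (m d) 1) =
          Ideal.Quotient.mk I (monomial (Function.invFun m (m d)) 1) := by
        have := (basisMonomials (Fin 2) k).constr_basis k
          (fun e => Ideal.Quotient.mk I (monomial (Function.invFun m e) 1)) (m d)
        rwa [coe_basisMonomials] at this
      simp only [coe_basisMonomials, LinearMap.comp_apply, AlgHom.toLinearMap_apply, aux_image,
        Ideal.Quotient.mkₐ_eq_mk]
      refine hψ.trans ?_
      generalize Function.invFun m (m d) = d' at h0
      have h1 := DFunLike.congr_fun h0 0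
      have h2 := DFunLike.congr_fun h0 1
      simp [m] at h1 h2
      rw [aux_monomial, aux_monomial]
      rcases le_total (d' 2) (d 2) with h | h
      · exact aux_mono k _ _ _ _ _ _ h1 h2 h
      · exact (aux_mono k _ _ _ _ _ _ h1.symm h2.symm h).symm
    have := LinearMap.congr_fun key f
    simp only [LinearMap.comp_apply, AlgHom.toLinearMap_apply] at this
    rw [← Ideal.Quotient.eq_zero_iff_mem]
    refine this.symm.trans ?_
    exact (congrArg ψ hf).trans (map_zero ψ)
  · rw [Ideal.span_singleton_le_iff_mem, RingHom.mem_ker]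
    simp
    ring
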